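/- Let w be a word in H^1 and k a positive integer. If w = 1 then y ш̄ z_k = z_1 z_k + Σ_{j=0}^{k−2} z_{k−j} z_{j+1} − (k+1) z_{k+1} + z_k z_1, and if w ≠ 1 then y ш̄ z_k w = z_1 z_k w + Σ_{j=0}^{k−2} z_{k−j} z_{j+1} w − k z_{k+1} w + z_k (y ш̄ w), where the summation is treated as 0 when k = 1. -/

import Mathlib

open scoped BigOperators

/-- The two-letter alphabet {x, y}. -/
inductive Letter : Type
  | x : Letter
  | y : Letter
deriving DecidableEq

/-- `H = ℚ⟨x,y⟩`, the noncommutative polynomial ring over ℚ in two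
indeterminates, realized as the monoid algebra of the free monoid on `{x,y}`. -/
abbrev H : Type := MonoidAlgebra ℚ (FreeMonoid Letter)

namespace H

/-- The monomial (word) of `H` corresponding to an element of the free monoid. -/
noncomputable def word (w : FreeMonoid Letter) : H := MonoidAlgebra.single w 1

/-- The generator `x`. -/
noncomputable def X : H := word (FreeMonoid.of Letter.x)

/-- The generator `y`. -/
noncomputable def Y : H := word (FreeMonoid.of Letter.y)

/-- The word `z_k = x^{k-1} y` (for `k ≥ 1`). -/
def zW (k : ℕ) : FreeMonoid Letter :=
  FreeMonoid.ofList (List.replicate (k - 1) Letter.x ++ [Letter.y])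

/-- `z_k = x^{k-1} y` as an element of `H`. -/
noncomputable def z (k : ℕ) : H := word (zW k)

/-- A list `[k₁,…,kₙ]` gives the word `z_{k₁} z_{k₂} ⋯ z_{kₙ}`. -/
def zListW (ks : List ℕ) : FreeMonoid Letter :=
  FreeMonoid.ofList (ks.flatMap fun k => List.replicate (k - 1) Letter.x ++ [Letter.y])

/-- `H¹ = ℚ + Hy` as a ℚ-submodule of `H`. -/
noncomputable def H1 : Submodule ℚ H :=
  LinearMap.range (LinearMap.mulRight ℚ Y) ⊔ Submodule.span ℚ {1}

/-- `H⁰ = ℚ + xHy` as a ℚ-submodule of `H`. -/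
noncomputable def H0 : Submodule ℚ H :=
  LinearMap.range ((LinearMap.mulRight ℚ Y).comp (LinearMap.mulLeft ℚ X)) ⊔
    Submodule.span ℚ {1}

/-- Parse a word of `H¹` into the exponent list of its `z`-decomposition:
`z_{k₁}⋯z_{kₙ} ↦ [k₁,…,kₙ]` (auxiliary accumulator version). -/
def toZAux : List Letter → ℕ → List ℕ
  | [], _ => []
  | Letter.x :: r, n => toZAux r (n + 1)
  | Letter.y :: r, n => (n + 1) :: toZAux r 0

/-- The `z`-decomposition of a word of `H¹`. -/
def toZ (w : FreeMonoid Letter) : List ℕ := toZAux (FreeMonoid.toList w) 0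

/-- The harmonic product on words of `H¹` (via `z`-decompositions):
`1 * w = w * 1 = w` and
`z_k w₁ * z_l w₂ = z_k (w₁ * z_l w₂) + z_l (z_k w₁ * w₂) + z_{k+l} (w₁ * w₂)`. -/
noncomputable def harmW : List ℕ → List ℕ → H
  | [], w => word (zListW w)
  | k :: w1, [] => word (zListW (k :: w1))
  | k :: w1, l :: w2 =>
      z k * harmW w1 (l :: w2) + z l * harmW (k :: w1) w2 + z (k + l) * harmW w1 w2
termination_by w1 w2 => w1.length + w2.length
decreasing_by all_goals simp [Nat.lt_succ_iff] <;> omega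

/-- The n-harmonic product on words of `H¹`:
`1 *̄ w = w *̄ 1 = w` and
`z_k w₁ *̄ z_l w₂ = z_k (w₁ *̄ z_l w₂) + z_l (z_k w₁ *̄ w₂) − z_{k+l} (w₁ *̄ w₂)`. -/
noncomputable def nharmW : List ℕ → List ℕ → H
  | [], w => word (zListW w)
  | k :: w1, [] => word (zListW (k :: w1))
  | k :: w1, l :: w2 =>
      z k * nharmW w1 (l :: w2) + z l * nharmW (k :: w1) w2 - z (k + l) * nharmW w1 w2
termination_by w1 w2 => w1.length + w2.length
decreasing_by all_goals simp [Nat.lt_succ_iff] <;> omega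

/-- The harmonic product `*` on `H¹`, extended ℚ-bilinearly. -/
noncomputable def harm (a b : H) : H :=
  Finsupp.sum a.coeff fun w1 c1 =>
    Finsupp.sum b.coeff fun w2 c2 => (c1 * c2) • harmW (toZ w1) (toZ w2)

/-- The n-harmonic product `*̄` on `H¹`, extended ℚ-bilinearly. -/
noncomputable def nharm (a b : H) : H :=
  Finsupp.sum a.coeff fun w1 c1 =>
    Finsupp.sum b.coeff fun w2 c2 => (c1 * c2) • nharmW (toZ w1) (toZ w2)

/-- The letter exchange `τ(x) = y`, `τ(y) = x`. -/
def τ : Letter → Letter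
  | Letter.x => Letter.y
  | Letter.y => Letter.x

/-- `δ(w) = 1` if `w` is the empty word, `0` otherwise. -/
def δ : List Letter → ℚ
  | [] => 1
  | _ :: _ => 0

/-- The shuffle product on words:
`1 ш w = w ш 1 = w` and `u₁w₁ ш u₂w₂ = u₁(w₁ ш u₂w₂) + u₂(u₁w₁ ш w₂)`. -/
noncomputable def shW : List Letter → List Letter → H
  | [], w => word (FreeMonoid.ofList w)
  | u :: w, [] => word (FreeMonoid.ofList (u :: w))
  | u1 :: w1, u2 :: w2 =>
      word (FreeMonoid.of u1) * shW w1 (u2 :: w2) +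
        word (FreeMonoid.of u2) * shW (u1 :: w1) w2
termination_by w1 w2 => w1.length + w2.length
decreasing_by all_goals simp [Nat.lt_succ_iff]

/-- The n-shuffle product on words: `1 ш̄ w = w ш̄ 1 = w` and
`u₁w₁ ш̄ u₂w₂ = u₁(w₁ ш̄ u₂w₂) + u₂(u₁w₁ ш̄ w₂) − δ(w₁)τ(u₁)u₂w₂ − δ(w₂)τ(u₂)u₁w₁`. -/
noncomputable def nshW : List Letter → List Letter → H
  | [], w => word (FreeMonoid.ofList w)
  | u :: w, [] => word (FreeMonoid.ofList (u :: w))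
  | u1 :: w1, u2 :: w2 =>
      word (FreeMonoid.of u1) * nshW w1 (u2 :: w2) +
        word (FreeMonoid.of u2) * nshW (u1 :: w1) w2 -
        δ w1 • word (FreeMonoid.ofList (τ u1 :: u2 :: w2)) -
        δ w2 • word (FreeMonoid.ofList (τ u2 :: u1 :: w1))
termination_by w1 w2 => w1.length + w2.length
decreasing_by all_goals simp [Nat.lt_succ_iff]

/-- The shuffle product `ш` on `H`, extended ℚ-bilinearly. -/
noncomputable def sh (a b : H) : H :=
  Finsupp.sum a.coeff fun w1 c1 =>
    Finsupp.sum b.coeff fun w2 c2 =>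
      (c1 * c2) • shW (FreeMonoid.toList w1) (FreeMonoid.toList w2)

/-- The n-shuffle product `ш̄` on `H`, extended ℚ-bilinearly. -/
noncomputable def nsh (a b : H) : H :=
  Finsupp.sum a.coeff fun w1 c1 =>
    Finsupp.sum b.coeff fun w2 c2 =>
      (c1 * c2) • nshW (FreeMonoid.toList w1) (FreeMonoid.toList w2)

/-- `S₁`: the ℚ-algebra endomorphism of `H` with `S₁(x) = x`, `S₁(y) = x + y`. -/
noncomputable def S1 : H →ₐ[ℚ] H :=
  MonoidAlgebra.lift ℚ H (FreeMonoid Letter)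
    (FreeMonoid.lift fun u => match u with
      | Letter.x => X
      | Letter.y => X + Y)

/-- `S₂`: the ℚ-algebra endomorphism of `H` with `S₂(x) = x`, `S₂(y) = y − x`. -/
noncomputable def S2 : H →ₐ[ℚ] H :=
  MonoidAlgebra.lift ℚ H (FreeMonoid Letter)
    (FreeMonoid.lift fun u => match u with
      | Letter.x => X
      | Letter.y => Y - X)

/-- `S` on a word: `S(1) = 1` and `S(Fy) = S₁(F)y`. -/
noncomputable def SW (w : FreeMonoid Letter) : H :=
  match (FreeMonoid.toList w).getLast? with
  | some Letter.y =>
      S1 (word (FreeMonoid.ofList (FreeMonoid.toList w).dropLast)) * Y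
  | _ => word w

/-- The ℚ-linear map `S : H¹ → H¹` with `S(1) = 1`, `S(Fy) = S₁(F)y`. -/
noncomputable def S (a : H) : H := Finsupp.sum a.coeff fun w c => c • SW w

/-- `S̃` on a word: `S̃(1) = 1` and `S̃(Fy) = S₂(F)y`. -/
noncomputable def StW (w : FreeMonoid Letter) : H :=
  match (FreeMonoid.toList w).getLast? with
  | some Letter.y =>
      S2 (word (FreeMonoid.ofList (FreeMonoid.toList w).dropLast)) * Y
  | _ => word w

/-- The ℚ-linear map `S̃ : H¹ → H¹` with `S̃(1) = 1`, `S̃(Fy) = S₂(F)y`. -/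
noncomputable def St (a : H) : H := Finsupp.sum a.coeff fun w c => c • StW w

/-- The multiple zeta value `ζ(k₁,…,kₙ)`: the sum over strictly decreasing
tuples `m₁ > m₂ > ⋯ > mₙ > 0` of `1/(m₁^{k₁}⋯mₙ^{kₙ})`. -/
noncomputable def mzeta (ks : List ℕ) : ℝ :=
  ∑' m : {f : Fin ks.length → ℕ // (∀ i, 0 < f i) ∧
      ∀ i j : Fin ks.length, i < j → f j < f i},
    ∏ i : Fin ks.length, ((m.1 i : ℝ) ^ ks.get i)⁻¹

/-- The non-strict multiple zeta value `ζ̄(k₁,…,kₙ)`: the sum over weakly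
decreasing tuples `m₁ ≥ m₂ ≥ ⋯ ≥ mₙ > 0` of `1/(m₁^{k₁}⋯mₙ^{kₙ})`. -/
noncomputable def nmzeta (ks : List ℕ) : ℝ :=
  ∑' m : {f : Fin ks.length → ℕ // (∀ i, 0 < f i) ∧
      ∀ i j : Fin ks.length, i ≤ j → f j ≤ f i},
    ∏ i : Fin ks.length, ((m.1 i : ℝ) ^ ks.get i)⁻¹

/-- The evaluation map `Z : H⁰ → ℝ`, `Z(1) = 1`,
`Z(z_{k₁}⋯z_{kₙ}) = ζ(k₁,…,kₙ)` (extended ℚ-linearly to `H`). -/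
noncomputable def Z (a : H) : ℝ := Finsupp.sum a.coeff fun w c => (c : ℝ) * mzeta (toZ w)

/-- The n-evaluation map `Z̄ : H⁰ → ℝ`, `Z̄(1) = 1`,
`Z̄(z_{k₁}⋯z_{kₙ}) = ζ̄(k₁,…,kₙ)` (extended ℚ-linearly to `H`). -/
noncomputable def Zbar (a : H) : ℝ := Finsupp.sum a.coeff fun w c => (c : ℝ) * nmzeta (toZ w)

/-- `i`-fold n-harmonic power: `a^{*̄ 0} = 1`, `a^{*̄ (i+1)} = a *̄ a^{*̄ i}`. -/
noncomputable def nharmPow : ℕ → H → H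
  | 0, _ => 1
  | i + 1, a => nharm a (nharmPow i a)

/-- `i`-fold n-shuffle power: `a^{ш̄ 0} = 1`, `a^{ш̄ (i+1)} = a ш̄ a^{ш̄ i}`. -/
noncomputable def nshPow : ℕ → H → H
  | 0, _ => 1
  | i + 1, a => nsh a (nshPow i a)

end H

open H

/-!
Left multiplication by a letter turns `y ш̄ ·` into itself up to explicit terms:
`y ш̄ ua = yua + u(y ш̄ a) − xua − ε(a)τ(u)y` for every `a ∈ H`, where `ε(a)` is the constant term
of `a`. Iterating over the letters of `z_k = x^{k-1}y`, the constant term is felt only at the final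
letter `y`, where it contributes `−ε(a)z_{k+1}`. The two cases `w = 1` and `w ≠ 1` are the values
`ε(w) = 1` and `ε(w) = 0` of this one formula.
-/

namespace H

open FreeMonoid (of ofList toList)

theorem word_mul (v w : FreeMonoid Letter) : word (v * w) = word v * word w := by
  simp [word, MonoidAlgebra.single_mul_single]

theorem coeff_one_word (w : FreeMonoid Letter) : (word w).coeff 1 = δ (toList w) := by
  cases w with
  | one => simp [word, δ]
  | of_mul u w => simp [word, δ]

theorem coeff_one_word_of_ne_one {w : FreeMonoid Letter} (hw : w ≠ 1) : (word w).coeff 1 = 0 :=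
  Finsupp.single_eq_of_ne hw.symm

theorem nsh_word (v w : FreeMonoid Letter) :
    nsh (word v) (word w) = nshW (toList v) (toList w) := by
  simp [nsh, word]

theorem nsh_one (a : H) : nsh a 1 = a := by
  have nshW_nil (l : List Letter) : nshW l [] = word (ofList l) := by cases l <;> rw [nshW]
  have smul_word (w : FreeMonoid Letter) (r : ℚ) : r • word w = .single w r := by simp [word]
  simp [nsh, MonoidAlgebra.one_def, nshW_nil, smul_word]

theorem nsh_add (a b c : H) : nsh a (b + c) = nsh a b + nsh a c := by
  simp only [nsh, MonoidAlgebra.coeff_add, ← Finsupp.sum_add]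
  refine Finsupp.sum_congr fun v _ ↦ ?_
  exact Finsupp.sum_add_index' (by simp) fun w s t ↦ by rw [mul_add, add_smul]

theorem nsh_smul (r : ℚ) (a b : H) : nsh a (r • b) = r • nsh a b := by
  simp only [nsh, MonoidAlgebra.coeff_smul, Finsupp.smul_sum]
  refine Finsupp.sum_congr fun v _ ↦ ?_
  rw [Finsupp.sum_smul_index (by simp)]
  simp only [smul_smul, mul_left_comm]

theorem nshW_singleton_cons (v u : Letter) (l : List Letter) :
    nshW [v] (u :: l) =
      word (of v) * word (of u) * word (ofList l) + word (of u) * nshW [v] l -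
        word (of (τ v)) * word (of u) * word (ofList l) -
        δ l • (word (of (τ u)) * word (of v)) := by
  rw [nshW, nshW]
  simp [δ, word_mul, mul_assoc]

theorem nsh_word_of_word_of_mul (v u : Letter) (a : H) :
    nsh (word (of v)) (word (of u) * a) =
      word (of v) * word (of u) * a + word (of u) * nsh (word (of v)) a -
        word (of (τ v)) * word (of u) * a - a.coeff 1 • (word (of (τ u)) * word (of v)) := by
  induction a using MonoidAlgebra.induction_on with
  | of w =>
    change nsh _ (_ * word w) = _ * word w + _ * nsh _ (word w) - _ * word w - (word w).coeff 1 • _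
    rw [← word_mul (of u) w, nsh_word, nsh_word, coeff_one_word]
    exact nshW_singleton_cons v u (toList w)
  | add a b iha ihb =>
    simp only [mul_add, nsh_add, iha, ihb, MonoidAlgebra.coeff_add, Finsupp.add_apply, add_smul]
    abel
  | smul r a iha =>
    simp only [mul_smul_comm, nsh_smul, iha, MonoidAlgebra.coeff_smul_apply, smul_eq_mul, mul_smul,
      smul_add, smul_sub]

theorem z_one : z 1 = Y := rfl

theorem z_succ {k : ℕ} (hk : 0 < k) : z (k + 1) = X * z k := by
  obtain ⟨n, rfl⟩ := Nat.exists_eq_add_one.mpr hk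
  exact word_mul (of Letter.x) (zW (n + 1))

theorem coeff_one_z_mul (k : ℕ) (a : H) : (z k * a).coeff 1 = 0 :=
  MonoidAlgebra.coeff_single_mul_of_forall_mul_ne _ _ fun w ↦ by simp [zW]

theorem nsh_Y_X_mul (a : H) :
    nsh Y (X * a) = Y * X * a + X * nsh Y a - X * X * a - a.coeff 1 • (Y * Y) :=
  nsh_word_of_word_of_mul Letter.y Letter.x a

theorem nsh_Y_Y_mul (a : H) :
    nsh Y (Y * a) = Y * Y * a + Y * nsh Y a - X * Y * a - a.coeff 1 • (X * Y) :=
  nsh_word_of_word_of_mul Letter.y Letter.y a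

theorem sum_z_mul_z_succ (n : ℕ) :
    ∑ j ∈ Finset.range (n + 1), z (n + 2 - j) * z (j + 1) =
      X * ∑ j ∈ Finset.range n, z (n + 1 - j) * z (j + 1) + z 2 * z (n + 1) := by
  rw [Finset.sum_range_succ, Finset.mul_sum, Nat.add_sub_cancel_left]
  congr! 2 with j hj
  have hjn : j < n := Finset.mem_range.mp hj
  rw [← mul_assoc, ← z_succ (by omega), show n + 2 - j = n + 1 - j + 1 by omega]

end H

theorem lemma_3_2_i_general (k : ℕ) (hk : 0 < k) (a : H) :
    nsh Y (z k * a) =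
      z 1 * z k * a + (∑ j ∈ Finset.range (k - 1), z (k - j) * z (j + 1) * a) -
        (k : ℚ) • (z (k + 1) * a) + z k * nsh Y a - a.coeff 1 • z (k + 1) := by
  rw [← Finset.sum_mul]
  induction k, hk using Nat.le_induction with
  | base =>
    rw [z_succ one_pos, z_one, nsh_Y_Y_mul]
    simp only [Nat.sub_self, Finset.sum_range_zero, zero_mul, Nat.cast_one]
    module
  | succ k hk ih =>
    obtain ⟨n, rfl⟩ := Nat.exists_eq_add_one.mpr hk
    rw [z_succ hk, mul_assoc, nsh_Y_X_mul, coeff_one_z_mul, ih]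
    simp only [Nat.add_sub_cancel, sum_z_mul_z_succ, z_succ (Nat.succ_pos _), z_one]
    push_cast
    simp only [mul_add, add_mul, mul_sub, mul_assoc, mul_smul_comm]
    module

theorem nsh_Y_z {k : ℕ} (hk : 0 < k) :
    nsh Y (z k) =
      z 1 * z k + (∑ j ∈ Finset.range (k - 1), z (k - j) * z (j + 1)) -
        ((k : ℚ) + 1) • z (k + 1) + z k * z 1 := by
  have h := lemma_3_2_i_general k hk 1
  simp only [mul_one, nsh_one, MonoidAlgebra.coeff_one_one] at h
  rw [h, z_one]
  module

/-- Lemma 3.2 (i): for a word `w` of `H¹` and a positive integer `k`,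
`y ш̄ z_k = z₁z_k + Σ_{j=0}^{k−2} z_{k−j}z_{j+1} − (k+1)z_{k+1} + z_k z₁`
(when `w = 1`) and
`y ш̄ z_k w = z₁z_k w + Σ_{j=0}^{k−2} z_{k−j}z_{j+1} w − k z_{k+1} w + z_k(y ш̄ w)`
(when `w ≠ 1`), the summation being empty when `k = 1`. -/
theorem lemma_3_2_i (k : ℕ) (hk : 0 < k) (w : FreeMonoid Letter)
    (hw : word w ∈ H1) :
    (w = 1 → nsh Y (z k) =
      z 1 * z k + (∑ j ∈ Finset.range (k - 1), z (k - j) * z (j + 1)) -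
        ((k : ℚ) + 1) • z (k + 1) + z k * z 1) ∧
    (w ≠ 1 → nsh Y (z k * word w) =
      z 1 * z k * word w +
        (∑ j ∈ Finset.range (k - 1), z (k - j) * z (j + 1) * word w) -
        (k : ℚ) • (z (k + 1) * word w) + z k * nsh Y (word w)) := by
  refine ⟨fun _ ↦ nsh_Y_z hk, fun hw₁ ↦ ?_⟩
  rw [lemma_3_2_i_general k hk, coeff_one_word_of_ne_one hw₁, zero_smul, sub_zero]
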